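/- Head expansion: if M′ ≐ N ∈ A [Ψ] and for every total dimension substitution ψ : Ψ′ → Ψ one has Mψ ↦* M′ψ, then M ≐ N ∈ A [Ψ]. In particular, if M′ ∈ A [Ψ] then M ∈ A [Ψ]. -/

import Mathlib

/-!
Formalization of the syntax, operational semantics, and meaning explanations of
Angiuli–Harper–Wilson computational higher type theory ("Computational
higher-dimensional type theory").  Dimension binders are handled in
locally-nameless style: free dimension names are natural numbers (`Dim.fvar`),
bound dimension variables are de Bruijn indices (`Dim.bvar`).  Term variables
are de Bruijn indices (`Tm.var`).
-/

namespace CHTT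

/-- Dimension terms: the constants 0 and 1, free dimension names, and bound
dimension variables (de Bruijn, for the binders `x.A`, `y.N`, `x.L`). -/
inductive Dim : Type
  | d0 : Dim
  | d1 : Dim
  | fvar : ℕ → Dim
  | bvar : ℕ → Dim
deriving DecidableEq, Repr

namespace Dim

/-- Apply a dimension substitution (acting on free dimension names). -/
def subst (ψ : ℕ → Dim) : Dim → Dim
  | fvar x => ψ x
  | d0 => d0
  | d1 => d1
  | bvar i => bvar i

/-- Instantiate the bound dimension variable `k` with `r`. -/
def openAt (k : ℕ) (r : Dim) : Dim → Dim
  | bvar i => if i = k then r else bvar i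
  | fvar x => fvar x
  | d0 => d0
  | d1 => d1

/-- Abstract the free dimension name `x` to the bound variable `k`. -/
def closeAt (k x : ℕ) : Dim → Dim
  | fvar y => if y = x then bvar k else fvar y
  | bvar i => bvar i
  | d0 => d0
  | d1 => d1

/-- Free dimension names of a dimension term. -/
def fd : Dim → Finset ℕ
  | fvar x => {x}
  | bvar _ => ∅
  | d0 => ∅
  | d1 => ∅

end Dim

/-- A dimension term is a constant (`0` or `1`). -/
def IsConst (r : Dim) : Prop := r = Dim.d0 ∨ r = Dim.d1

/-- Well-formed dimension term relative to a dimension context `Ψ`. -/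
def wfDim (Ψ : Finset ℕ) : Dim → Prop
  | Dim.d0 => True
  | Dim.d1 => True
  | Dim.fvar x => x ∈ Ψ
  | Dim.bvar _ => False

/-- Terms of computational higher type theory. -/
inductive Tm : Type
  | var : ℕ → Tm                              -- term variable (de Bruijn)
  | arr : Tm → Tm → Tm                        -- A → B
  | prod : Tm → Tm → Tm                       -- A × B
  | bool : Tm
  | notb : Dim → Tm                           -- not(r)
  | circle : Tm                               -- S¹
  | lam : Tm → Tm                             -- λa.M
  | app : Tm → Tm → Tm
  | pair : Tm → Tm → Tm
  | fst : Tm → Tm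
  | snd : Tm → Tm
  | tt : Tm                                   -- true
  | ff : Tm                                   -- false
  | ifb : Tm → Tm → Tm → Tm → Tm              -- if(A; M; T; F)
  | notel : Dim → Tm → Tm                     -- not_el(r; M)
  | base : Tm
  | loop : Dim → Tm
  | celim : Tm → Tm → Tm → Tm → Tm            -- S¹-elim(A; M; P; x.L), L binds dim bvar 0
  | coe : Tm → Dim → Dim → Tm → Tm            -- coe(x.A; r⇝r'; M), A binds dim bvar 0
  | hcom : Dim → Tm → Dim → Dim → Tm → Tm → Tm → Tm
      -- hcom^{r₁}_A(r⇝r'; M; y.N⁰, y.N¹), the tubes N⁰ N¹ bind dim bvar 0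
deriving DecidableEq, Repr

namespace Tm

/-- Apply a dimension substitution (acting on free dimension names) to a term. -/
def dsubst (ψ : ℕ → Dim) : Tm → Tm
  | var a => var a
  | arr A B => arr (A.dsubst ψ) (B.dsubst ψ)
  | prod A B => prod (A.dsubst ψ) (B.dsubst ψ)
  | bool => bool
  | notb r => notb (r.subst ψ)
  | circle => circle
  | lam M => lam (M.dsubst ψ)
  | app M N => app (M.dsubst ψ) (N.dsubst ψ)
  | pair M N => pair (M.dsubst ψ) (N.dsubst ψ)
  | fst M => fst (M.dsubst ψ)
  | snd M => snd (M.dsubst ψ)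
  | tt => tt
  | ff => ff
  | ifb A M T F => ifb (A.dsubst ψ) (M.dsubst ψ) (T.dsubst ψ) (F.dsubst ψ)
  | notel r M => notel (r.subst ψ) (M.dsubst ψ)
  | base => base
  | loop r => loop (r.subst ψ)
  | celim A M P L => celim (A.dsubst ψ) (M.dsubst ψ) (P.dsubst ψ) (L.dsubst ψ)
  | coe A r r' M => coe (A.dsubst ψ) (r.subst ψ) (r'.subst ψ) (M.dsubst ψ)
  | hcom e A r r' M N0 N1 =>
      hcom (e.subst ψ) (A.dsubst ψ) (r.subst ψ) (r'.subst ψ) (M.dsubst ψ)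
        (N0.dsubst ψ) (N1.dsubst ψ)

/-- Substitution of a dimension term for a single free dimension name:
`M⟨r/x⟩`. -/
def dsubstName (x : ℕ) (r : Dim) (M : Tm) : Tm :=
  M.dsubst (fun y => if y = x then r else Dim.fvar y)

/-- Instantiate the bound dimension variable `k` with the dimension `r`. -/
def dopenAt (k : ℕ) (r : Dim) : Tm → Tm
  | var a => var a
  | arr A B => arr (A.dopenAt k r) (B.dopenAt k r)
  | prod A B => prod (A.dopenAt k r) (B.dopenAt k r)
  | bool => bool
  | notb r1 => notb (r1.openAt k r)
  | circle => circle
  | lam M => lam (M.dopenAt k r)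
  | app M N => app (M.dopenAt k r) (N.dopenAt k r)
  | pair M N => pair (M.dopenAt k r) (N.dopenAt k r)
  | fst M => fst (M.dopenAt k r)
  | snd M => snd (M.dopenAt k r)
  | tt => tt
  | ff => ff
  | ifb A M T F => ifb (A.dopenAt k r) (M.dopenAt k r) (T.dopenAt k r) (F.dopenAt k r)
  | notel r1 M => notel (r1.openAt k r) (M.dopenAt k r)
  | base => base
  | loop r1 => loop (r1.openAt k r)
  | celim A M P L =>
      celim (A.dopenAt k r) (M.dopenAt k r) (P.dopenAt k r) (L.dopenAt (k+1) r)
  | coe A r1 r2 M =>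
      coe (A.dopenAt (k+1) r) (r1.openAt k r) (r2.openAt k r) (M.dopenAt k r)
  | hcom e A r1 r2 M N0 N1 =>
      hcom (e.openAt k r) (A.dopenAt k r) (r1.openAt k r) (r2.openAt k r)
        (M.dopenAt k r) (N0.dopenAt (k+1) r) (N1.dopenAt (k+1) r)

/-- Instantiate the outermost bound dimension variable: for a dimension binder
`y.N`, `N.dopen r` is `N⟨r/y⟩`. -/
def dopen (r : Dim) (M : Tm) : Tm := M.dopenAt 0 r

/-- Abstract the free dimension name `x` to the bound variable `k`. -/
def closeAt (k x : ℕ) : Tm → Tm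
  | var a => var a
  | arr A B => arr (A.closeAt k x) (B.closeAt k x)
  | prod A B => prod (A.closeAt k x) (B.closeAt k x)
  | bool => bool
  | notb r1 => notb (r1.closeAt k x)
  | circle => circle
  | lam M => lam (M.closeAt k x)
  | app M N => app (M.closeAt k x) (N.closeAt k x)
  | pair M N => pair (M.closeAt k x) (N.closeAt k x)
  | fst M => fst (M.closeAt k x)
  | snd M => snd (M.closeAt k x)
  | tt => tt
  | ff => ff
  | ifb A M T F => ifb (A.closeAt k x) (M.closeAt k x) (T.closeAt k x) (F.closeAt k x)
  | notel r1 M => notel (r1.closeAt k x) (M.closeAt k x)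
  | base => base
  | loop r1 => loop (r1.closeAt k x)
  | celim A M P L =>
      celim (A.closeAt k x) (M.closeAt k x) (P.closeAt k x) (L.closeAt (k+1) x)
  | coe A r1 r2 M =>
      coe (A.closeAt (k+1) x) (r1.closeAt k x) (r2.closeAt k x) (M.closeAt k x)
  | hcom e A r1 r2 M N0 N1 =>
      hcom (e.closeAt k x) (A.closeAt k x) (r1.closeAt k x) (r2.closeAt k x)
        (M.closeAt k x) (N0.closeAt (k+1) x) (N1.closeAt (k+1) x)

/-- Abstract a free dimension name, producing the body of a dimension binder:
`x.(M)`. -/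
def close (x : ℕ) (M : Tm) : Tm := M.closeAt 0 x

/-- Free dimension names of a term: `fd(M)`. -/
def fd : Tm → Finset ℕ
  | var _ => ∅
  | arr A B => A.fd ∪ B.fd
  | prod A B => A.fd ∪ B.fd
  | bool => ∅
  | notb r => r.fd
  | circle => ∅
  | lam M => M.fd
  | app M N => M.fd ∪ N.fd
  | pair M N => M.fd ∪ N.fd
  | fst M => M.fd
  | snd M => M.fd
  | tt => ∅
  | ff => ∅
  | ifb A M T F => A.fd ∪ M.fd ∪ T.fd ∪ F.fd
  | notel r M => r.fd ∪ M.fd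
  | base => ∅
  | loop r => r.fd
  | celim A M P L => A.fd ∪ M.fd ∪ P.fd ∪ L.fd
  | coe A r r' M => A.fd ∪ r.fd ∪ r'.fd ∪ M.fd
  | hcom e A r r' M N0 N1 => e.fd ∪ A.fd ∪ r.fd ∪ r'.fd ∪ M.fd ∪ N0.fd ∪ N1.fd

/-- Shift term variables `≥ c` up by one (for going under a `lam`). -/
def lift (c : ℕ) : Tm → Tm
  | var a => if a < c then var a else var (a+1)
  | arr A B => arr (A.lift c) (B.lift c)
  | prod A B => prod (A.lift c) (B.lift c)
  | bool => bool
  | notb r => notb r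
  | circle => circle
  | lam M => lam (M.lift (c+1))
  | app M N => app (M.lift c) (N.lift c)
  | pair M N => pair (M.lift c) (N.lift c)
  | fst M => fst (M.lift c)
  | snd M => snd (M.lift c)
  | tt => tt
  | ff => ff
  | ifb A M T F => ifb (A.lift c) (M.lift c) (T.lift c) (F.lift c)
  | notel r M => notel r (M.lift c)
  | base => base
  | loop r => loop r
  | celim A M P L => celim (A.lift c) (M.lift c) (P.lift c) (L.lift c)
  | coe A r r' M => coe (A.lift c) r r' (M.lift c)
  | hcom e A r r' M N0 N1 =>
      hcom e (A.lift c) r r' (M.lift c) (N0.lift c) (N1.lift c)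

/-- Substitute `N` for term variable `k` (de Bruijn), decrementing the
variables above `k`: used for β-reduction `M[N/a]`. -/
def tsubst : Tm → ℕ → Tm → Tm
  | var a, k, N => if a = k then N else if k < a then var (a-1) else var a
  | arr A B, k, N => arr (A.tsubst k N) (B.tsubst k N)
  | prod A B, k, N => prod (A.tsubst k N) (B.tsubst k N)
  | bool, _, _ => bool
  | notb r, _, _ => notb r
  | circle, _, _ => circle
  | lam M, k, N => lam (M.tsubst (k+1) (N.lift 0))
  | app M M', k, N => app (M.tsubst k N) (M'.tsubst k N)
  | pair M M', k, N => pair (M.tsubst k N) (M'.tsubst k N)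
  | fst M, k, N => fst (M.tsubst k N)
  | snd M, k, N => snd (M.tsubst k N)
  | tt, _, _ => tt
  | ff, _, _ => ff
  | ifb A M T F, k, N => ifb (A.tsubst k N) (M.tsubst k N) (T.tsubst k N) (F.tsubst k N)
  | notel r M, k, N => notel r (M.tsubst k N)
  | base, _, _ => base
  | loop r, _, _ => loop r
  | celim A M P L, k, N => celim (A.tsubst k N) (M.tsubst k N) (P.tsubst k N) (L.tsubst k N)
  | coe A r r' M, k, N => coe (A.tsubst k N) r r' (M.tsubst k N)
  | hcom e A r r' M N0 N1, k, N =>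
      hcom e (A.tsubst k N) r r' (M.tsubst k N) (N0.tsubst k N) (N1.tsubst k N)

/-- Simultaneous substitution of a list of (closed) terms for the term
variables, the head of the list standing for variable `0`. -/
def msubstAt (d : ℕ) (γ : List Tm) : Tm → Tm
  | var a => if a < d then var a else γ.getD (a - d) (var a)
  | arr A B => arr (A.msubstAt d γ) (B.msubstAt d γ)
  | prod A B => prod (A.msubstAt d γ) (B.msubstAt d γ)
  | bool => bool
  | notb r => notb r
  | circle => circle
  | lam M => lam (M.msubstAt (d+1) γ)
  | app M N => app (M.msubstAt d γ) (N.msubstAt d γ)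
  | pair M N => pair (M.msubstAt d γ) (N.msubstAt d γ)
  | fst M => fst (M.msubstAt d γ)
  | snd M => snd (M.msubstAt d γ)
  | tt => tt
  | ff => ff
  | ifb A M T F => ifb (A.msubstAt d γ) (M.msubstAt d γ) (T.msubstAt d γ) (F.msubstAt d γ)
  | notel r M => notel r (M.msubstAt d γ)
  | base => base
  | loop r => loop r
  | celim A M P L => celim (A.msubstAt d γ) (M.msubstAt d γ) (P.msubstAt d γ) (L.msubstAt d γ)
  | coe A r r' M => coe (A.msubstAt d γ) r r' (M.msubstAt d γ)
  | hcom e A r r' M N0 N1 =>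
      hcom e (A.msubstAt d γ) r r' (M.msubstAt d γ) (N0.msubstAt d γ) (N1.msubstAt d γ)

/-- Simultaneous (closing) term substitution `Mγ`. -/
def msubst (γ : List Tm) (M : Tm) : Tm := M.msubstAt 0 γ

end Tm

/-- `not(M)`, the boolean negation term, abbreviates `if(bool; M; false; true)`. -/
def notTm (M : Tm) : Tm := Tm.ifb Tm.bool M Tm.ff Tm.tt

/-- The canonical forms (values) of the language. -/
inductive IsVal : Tm → Prop
  | arr (A B : Tm) : IsVal (Tm.arr A B)
  | prod (A B : Tm) : IsVal (Tm.prod A B)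
  | bool : IsVal Tm.bool
  | notb (x : ℕ) : IsVal (Tm.notb (Dim.fvar x))
  | circle : IsVal Tm.circle
  | lam (M : Tm) : IsVal (Tm.lam M)
  | pair (M N : Tm) : IsVal (Tm.pair M N)
  | tt : IsVal Tm.tt
  | ff : IsVal Tm.ff
  | base : IsVal Tm.base
  | loop (x : ℕ) : IsVal (Tm.loop (Dim.fvar x))
  | notel (x : ℕ) (M : Tm) : IsVal (Tm.notel (Dim.fvar x) M)
  | hcomBool {x : ℕ} {r r' : Dim} (M N0 N1 : Tm) :
      r ≠ r' → IsVal (Tm.hcom (Dim.fvar x) Tm.bool r r' M N0 N1)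
  | hcomCircle {x : ℕ} {r r' : Dim} (M N0 N1 : Tm) :
      r ≠ r' → IsVal (Tm.hcom (Dim.fvar x) Tm.circle r r' M N0 N1)

/-- The one-step deterministic weak head reduction `M ↦ M′`. -/
inductive Step : Tm → Tm → Prop
  -- types
  | notbConst {ε : Dim} : IsConst ε → Step (Tm.notb ε) Tm.bool
  -- hcom/coe evaluate their type subscript
  | coeTy {A A' : Tm} {r r' : Dim} {M : Tm} :
      Step A A' → Step (Tm.coe A r r' M) (Tm.coe A' r r' M)
  | hcomTy {e : Dim} {A A' : Tm} {r r' : Dim} {M N0 N1 : Tm} :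
      Step A A' → Step (Tm.hcom e A r r' M N0 N1) (Tm.hcom e A' r r' M N0 N1)
  -- function types
  | appL {M M' N : Tm} : Step M M' → Step (Tm.app M N) (Tm.app M' N)
  | appBeta {M N : Tm} : Step (Tm.app (Tm.lam M) N) (M.tsubst 0 N)
  | hcomArr {e : Dim} {A B : Tm} {r r' : Dim} {M N0 N1 : Tm} :
      Step (Tm.hcom e (Tm.arr A B) r r' M N0 N1)
        (Tm.lam (Tm.hcom e B r r'
          (Tm.app (M.lift 0) (Tm.var 0))
          (Tm.app (N0.lift 0) (Tm.var 0))
          (Tm.app (N1.lift 0) (Tm.var 0))))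
  | coeArr {A B : Tm} {r r' : Dim} {M : Tm} :
      Step (Tm.coe (Tm.arr A B) r r' M)
        (Tm.lam (Tm.coe B r r'
          (Tm.app (M.lift 0) (Tm.coe A r' r (Tm.var 0)))))
  -- product types
  | fstCong {M M' : Tm} : Step M M' → Step (Tm.fst M) (Tm.fst M')
  | sndCong {M M' : Tm} : Step M M' → Step (Tm.snd M) (Tm.snd M')
  | fstPair {M N : Tm} : Step (Tm.fst (Tm.pair M N)) M
  | sndPair {M N : Tm} : Step (Tm.snd (Tm.pair M N)) N
  | hcomProd {e : Dim} {A B : Tm} {r r' : Dim} {M N0 N1 : Tm} :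
      Step (Tm.hcom e (Tm.prod A B) r r' M N0 N1)
        (Tm.pair
          (Tm.hcom e A r r' (Tm.fst M) (Tm.fst N0) (Tm.fst N1))
          (Tm.hcom e B r r' (Tm.snd M) (Tm.snd N0) (Tm.snd N1)))
  | coeProd {A B : Tm} {r r' : Dim} {M : Tm} :
      Step (Tm.coe (Tm.prod A B) r r' M)
        (Tm.pair (Tm.coe A r r' (Tm.fst M)) (Tm.coe B r r' (Tm.snd M)))
  -- booleans
  | hcomBool0 {A : Tm} {r r' : Dim} {M N0 N1 : Tm} :
      A = Tm.bool → Step (Tm.hcom Dim.d0 A r r' M N0 N1) (N0.dopen r')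
  | hcomBool1 {A : Tm} {r r' : Dim} {M N0 N1 : Tm} :
      A = Tm.bool → Step (Tm.hcom Dim.d1 A r r' M N0 N1) (N1.dopen r')
  | hcomBoolRefl {x : ℕ} {r : Dim} {M N0 N1 : Tm} :
      Step (Tm.hcom (Dim.fvar x) Tm.bool r r M N0 N1) M
  | ifbCong {A M M' T F : Tm} :
      Step M M' → Step (Tm.ifb A M T F) (Tm.ifb A M' T F)
  | ifbTrue {A T F : Tm} : Step (Tm.ifb A Tm.tt T F) T
  | ifbFalse {A T F : Tm} : Step (Tm.ifb A Tm.ff T F) F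
  | ifbHcom {A : Tm} {x : ℕ} {r r' : Dim} {M N0 N1 T F : Tm} :
      r ≠ r' →
      Step (Tm.ifb A (Tm.hcom (Dim.fvar x) Tm.bool r r' M N0 N1) T F)
        (Tm.hcom (Dim.fvar x) A r r'
          (Tm.ifb A M T F) (Tm.ifb A N0 T F) (Tm.ifb A N1 T F))
  | coeBool {r r' : Dim} {M : Tm} : Step (Tm.coe Tm.bool r r' M) M
  -- circle
  | hcomCircle0 {A : Tm} {r r' : Dim} {M N0 N1 : Tm} :
      A = Tm.circle → Step (Tm.hcom Dim.d0 A r r' M N0 N1) (N0.dopen r')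
  | hcomCircle1 {A : Tm} {r r' : Dim} {M N0 N1 : Tm} :
      A = Tm.circle → Step (Tm.hcom Dim.d1 A r r' M N0 N1) (N1.dopen r')
  | hcomCircleRefl {x : ℕ} {r : Dim} {M N0 N1 : Tm} :
      Step (Tm.hcom (Dim.fvar x) Tm.circle r r M N0 N1) M
  | loopConst {ε : Dim} : IsConst ε → Step (Tm.loop ε) Tm.base
  | celimCong {A M M' P L : Tm} :
      Step M M' → Step (Tm.celim A M P L) (Tm.celim A M' P L)
  | celimBase {A P L : Tm} : Step (Tm.celim A Tm.base P L) P
  | celimLoop {A P L : Tm} {w : ℕ} :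
      Step (Tm.celim A (Tm.loop (Dim.fvar w)) P L) (L.dopen (Dim.fvar w))
  | celimHcom {A : Tm} {x : ℕ} {r r' : Dim} {M N0 N1 P L : Tm} :
      r ≠ r' →
      Step (Tm.celim A (Tm.hcom (Dim.fvar x) Tm.circle r r' M N0 N1) P L)
        (Tm.hcom (Dim.fvar x) A r r'
          (Tm.celim A M P L) (Tm.celim A N0 P L) (Tm.celim A N1 P L))
  | coeCircle {r r' : Dim} {M : Tm} : Step (Tm.coe Tm.circle r r' M) M
  -- not
  | notel0 {M : Tm} : Step (Tm.notel Dim.d0 M) (notTm M)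
  | notel1 {M : Tm} : Step (Tm.notel Dim.d1 M) M
  | coeNotFlip {ε ε' : Dim} {M : Tm} :
      IsConst ε → IsConst ε' → ε ≠ ε' →
      Step (Tm.coe (Tm.notb (Dim.bvar 0)) ε ε' M) (notTm M)
  | coeNotRefl {ε : Dim} {M : Tm} :
      IsConst ε → Step (Tm.coe (Tm.notb (Dim.bvar 0)) ε ε M) M
  | coeNot0x {y : ℕ} {M : Tm} :
      Step (Tm.coe (Tm.notb (Dim.bvar 0)) Dim.d0 (Dim.fvar y) M)
        (Tm.notel (Dim.fvar y) (notTm M))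
  | coeNot1x {y : ℕ} {M : Tm} :
      Step (Tm.coe (Tm.notb (Dim.bvar 0)) Dim.d1 (Dim.fvar y) M)
        (Tm.notel (Dim.fvar y) M)
  | coeNotxCong {y : ℕ} {r : Dim} {M M' : Tm} :
      Step M M' →
      Step (Tm.coe (Tm.notb (Dim.bvar 0)) (Dim.fvar y) r M)
        (Tm.coe (Tm.notb (Dim.bvar 0)) (Dim.fvar y) r M')
  | coeNotxNotel {y : ℕ} {r : Dim} {M : Tm} :
      Step (Tm.coe (Tm.notb (Dim.bvar 0)) (Dim.fvar y) r (Tm.notel (Dim.fvar y) M))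
        (Tm.notel r M)
  | coeNotOther {y : ℕ} {r r' : Dim} {M : Tm} :
      Step (Tm.coe (Tm.notb (Dim.fvar y)) r r' M) M
  | hcomNot {e : Dim} {w : ℕ} {r r' : Dim} {M N0 N1 : Tm} :
      Step (Tm.hcom e (Tm.notb (Dim.fvar w)) r r' M N0 N1)
        (Tm.notel (Dim.fvar w)
          (Tm.hcom e Tm.bool r r'
            (Tm.coe (Tm.notb (Dim.bvar 0)) (Dim.fvar w) Dim.d1 M)
            (Tm.coe (Tm.notb (Dim.bvar 0)) (Dim.fvar w) Dim.d1 N0)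
            (Tm.coe (Tm.notb (Dim.bvar 0)) (Dim.fvar w) Dim.d1 N1)))

/-- Iterated evaluation `M ↦* M′`. -/
def Steps : Tm → Tm → Prop := Relation.ReflTransGen Step

/-- Evaluation `M ⇓ V`. -/
def Eval (M V : Tm) : Prop := Steps M V ∧ IsVal V

/-- `ψ` is a total dimension substitution from `Ψ′` to `Ψ`: every name in `Ψ`
is sent to `0`, `1`, or a name in `Ψ′`. -/
def DSubst (ψ : ℕ → Dim) (Ψ' Ψ : Finset ℕ) : Prop :=
  ∀ x ∈ Ψ, ψ x = Dim.d0 ∨ ψ x = Dim.d1 ∨ ∃ y ∈ Ψ', ψ x = Dim.fvar y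

/-- Composition of dimension substitutions: first `ψ₁`, then `ψ₂`
(so that `M(comp ψ₁ ψ₂) = (Mψ₁)ψ₂`). -/
def dcomp (ψ₁ ψ₂ : ℕ → Dim) : ℕ → Dim := fun x => (ψ₁ x).subst ψ₂

/-- A candidate cubical type system: it designates certain values of each
dimension as naming PERs on values of the same dimension. -/
structure TypeSys where
  /-- The value `A` names a PER at dimension context `Ψ`. -/
  isPer : Finset ℕ → Tm → Prop
  /-- `M ≈ N ∈ ⟦A⟧_Ψ` : values `M`, `N` are related in the PER named by the
  value `A` at `Ψ`. -/
  vper : Finset ℕ → Tm → Tm → Tm → Prop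
  vper_symm : ∀ {Ψ A M N}, vper Ψ A M N → vper Ψ A N M
  vper_trans : ∀ {Ψ A M N P}, vper Ψ A M N → vper Ψ A N P → vper Ψ A M P

namespace TypeSys

variable (τ : TypeSys)

/-- The values `A` and `B` name equal PERs at `Ψ`. -/
def eqPer (Ψ : Finset ℕ) (A B : Tm) : Prop :=
  τ.isPer Ψ A ∧ τ.isPer Ψ B ∧ ∀ M N, (τ.vper Ψ A M N ↔ τ.vper Ψ B M N)

/-- `A ≐ B pretype [Ψ]` : all iterated dimension-substitution instances of `A`
and `B` evaluate coherently to values naming equal PERs. -/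
def ceqPretype (Ψ : Finset ℕ) (A B : Tm) : Prop :=
  ∀ (Ψ₁ Ψ₂ : Finset ℕ) (ψ₁ ψ₂ : ℕ → Dim),
    DSubst ψ₁ Ψ₁ Ψ → DSubst ψ₂ Ψ₂ Ψ₁ →
    ∃ A₁ A₂ A₁₂ B₁ B₂ B₁₂,
      Eval (A.dsubst ψ₁) A₁ ∧ Eval (A₁.dsubst ψ₂) A₂ ∧
      Eval (A.dsubst (dcomp ψ₁ ψ₂)) A₁₂ ∧
      Eval (B.dsubst ψ₁) B₁ ∧ Eval (B₁.dsubst ψ₂) B₂ ∧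
      Eval (B.dsubst (dcomp ψ₁ ψ₂)) B₁₂ ∧
      τ.eqPer Ψ₂ A₂ A₁₂ ∧ τ.eqPer Ψ₂ A₁₂ B₂ ∧ τ.eqPer Ψ₂ B₂ B₁₂

/-- `A pretype [Ψ]`. -/
def cpretype (Ψ : Finset ℕ) (A : Tm) : Prop := τ.ceqPretype Ψ A A

/-- `M ≐ N ∈ A [Ψ]` : all iterated dimension-substitution instances of `M` and
`N` evaluate coherently to values related in the PER named by the value of the
corresponding instance of `A`. -/
def ceqTm (Ψ : Finset ℕ) (A M N : Tm) : Prop :=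
  ∀ (Ψ₁ Ψ₂ : Finset ℕ) (ψ₁ ψ₂ : ℕ → Dim),
    DSubst ψ₁ Ψ₁ Ψ → DSubst ψ₂ Ψ₂ Ψ₁ →
    ∃ M₁ M₂ M₁₂ N₁ N₂ N₁₂ A₁₂,
      Eval (M.dsubst ψ₁) M₁ ∧ Eval (M₁.dsubst ψ₂) M₂ ∧
      Eval (M.dsubst (dcomp ψ₁ ψ₂)) M₁₂ ∧
      Eval (N.dsubst ψ₁) N₁ ∧ Eval (N₁.dsubst ψ₂) N₂ ∧
      Eval (N.dsubst (dcomp ψ₁ ψ₂)) N₁₂ ∧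
      Eval (A.dsubst (dcomp ψ₁ ψ₂)) A₁₂ ∧
      τ.vper Ψ₂ A₁₂ M₂ M₁₂ ∧ τ.vper Ψ₂ A₁₂ M₁₂ N₂ ∧ τ.vper Ψ₂ A₁₂ N₂ N₁₂

/-- `M ∈ A [Ψ]`. -/
def cofTm (Ψ : Finset ℕ) (A M : Tm) : Prop := τ.ceqTm Ψ A M M

/-- The pretype `A` is cubical: values related in the PER named by the value of
any instance `Aψ` are related as full members of `Aψ`. -/
def Cubical (Ψ : Finset ℕ) (A : Tm) : Prop :=
  ∀ (Ψ' : Finset ℕ) (ψ : ℕ → Dim), DSubst ψ Ψ' Ψ →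
    ∀ A₀, Eval (A.dsubst ψ) A₀ →
      ∀ M N, τ.vper Ψ' A₀ M N → τ.ceqTm Ψ' (A.dsubst ψ) M N

end TypeSys

/-- The dimension constant associated to a side `ε ∈ {0,1}` (encoded as a
`Bool`). -/
def dc : Bool → Dim := fun b => bif b then Dim.d1 else Dim.d0

/-- Select the `ε` tube of a composition problem. -/
def pick (b : Bool) (N0 N1 : Tm) : Tm := bif b then N1 else N0

namespace TypeSys

variable (τ : TypeSys)

/-- First uniform Kan condition: well-typedness (and congruence) of `hcom`. -/
def Kan1 (Ψ : Finset ℕ) (A : Tm) : Prop :=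
  ∀ (Ψ' : Finset ℕ) (x : ℕ), x ∉ Ψ' →
  ∀ ψ : ℕ → Dim, DSubst ψ (insert x Ψ') Ψ →
  ∀ r r' : Dim, wfDim (insert x Ψ') r → wfDim (insert x Ψ') r' →
  ∀ y : ℕ, y ∉ insert x Ψ' →
  ∀ M O N0 N1 P0 P1 : Tm,
    τ.ceqTm (insert x Ψ') (A.dsubst ψ) M O →
    (∀ b : Bool,
      τ.ceqTm (insert y Ψ') ((A.dsubst ψ).dsubstName x (dc b))
        (((pick b N0 N1).dopen (Dim.fvar y)).dsubstName x (dc b))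
        (((pick b P0 P1).dopen (Dim.fvar y)).dsubstName x (dc b))) →
    (∀ b : Bool,
      τ.ceqTm Ψ' ((A.dsubst ψ).dsubstName x (dc b))
        (((pick b N0 N1).dopen r).dsubstName x (dc b))
        (M.dsubstName x (dc b))) →
    τ.ceqTm (insert x Ψ') (A.dsubst ψ)
      (Tm.hcom (Dim.fvar x) (A.dsubst ψ) r r' M N0 N1)
      (Tm.hcom (Dim.fvar x) (A.dsubst ψ) r r' O P0 P1)

/-- Second uniform Kan condition: `hcom` from `r` to `r` is its cap. -/
def Kan2 (Ψ : Finset ℕ) (A : Tm) : Prop :=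
  ∀ (Ψ' : Finset ℕ) (x : ℕ), x ∉ Ψ' →
  ∀ ψ : ℕ → Dim, DSubst ψ (insert x Ψ') Ψ →
  ∀ r : Dim, wfDim (insert x Ψ') r →
  ∀ y : ℕ, y ∉ insert x Ψ' →
  ∀ M N0 N1 : Tm,
    τ.cofTm (insert x Ψ') (A.dsubst ψ) M →
    (∀ b : Bool,
      τ.cofTm (insert y Ψ') ((A.dsubst ψ).dsubstName x (dc b))
        (((pick b N0 N1).dopen (Dim.fvar y)).dsubstName x (dc b))) →
    (∀ b : Bool,
      τ.ceqTm Ψ' ((A.dsubst ψ).dsubstName x (dc b))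
        (((pick b N0 N1).dopen r).dsubstName x (dc b))
        (M.dsubstName x (dc b))) →
    τ.ceqTm (insert x Ψ') (A.dsubst ψ)
      (Tm.hcom (Dim.fvar x) (A.dsubst ψ) r r M N0 N1) M

/-- Third uniform Kan condition: `hcom` of extent a constant `ε` is its `ε`
tube face. -/
def Kan3 (Ψ : Finset ℕ) (A : Tm) : Prop :=
  ∀ (Ψ' : Finset ℕ) (ψ : ℕ → Dim), DSubst ψ Ψ' Ψ →
  ∀ r r' : Dim, wfDim Ψ' r → wfDim Ψ' r' →
  ∀ y : ℕ, y ∉ Ψ' →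
  ∀ (b : Bool) (M N0 N1 : Tm),
    τ.cofTm Ψ' (A.dsubst ψ) M →
    τ.cofTm (insert y Ψ') (A.dsubst ψ) ((pick b N0 N1).dopen (Dim.fvar y)) →
    τ.ceqTm Ψ' (A.dsubst ψ) ((pick b N0 N1).dopen r) M →
    τ.ceqTm Ψ' (A.dsubst ψ)
      (Tm.hcom (dc b) (A.dsubst ψ) r r' M N0 N1)
      ((pick b N0 N1).dopen r')

/-- Fourth uniform Kan condition: well-typedness (and congruence) of `coe`. -/
def Kan4 (Ψ : Finset ℕ) (A : Tm) : Prop :=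
  ∀ (Ψ' : Finset ℕ) (x : ℕ), x ∉ Ψ' →
  ∀ ψ : ℕ → Dim, DSubst ψ (insert x Ψ') Ψ →
  ∀ r r' : Dim, wfDim Ψ' r → wfDim Ψ' r' →
  ∀ M N : Tm,
    τ.ceqTm Ψ' ((A.dsubst ψ).dsubstName x r) M N →
    τ.ceqTm Ψ' ((A.dsubst ψ).dsubstName x r')
      (Tm.coe ((A.dsubst ψ).close x) r r' M)
      (Tm.coe ((A.dsubst ψ).close x) r r' N)

/-- The pretype `A` is (uniformly) Kan. -/
def isKan (Ψ : Finset ℕ) (A : Tm) : Prop :=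
  τ.Kan1 Ψ A ∧ τ.Kan2 Ψ A ∧ τ.Kan3 Ψ A ∧ τ.Kan4 Ψ A

/-- `A type [Ψ]` : `A` is a cubical Kan pretype. -/
def ctype (Ψ : Finset ℕ) (A : Tm) : Prop :=
  τ.cpretype Ψ A ∧ τ.Cubical Ψ A ∧ τ.isKan Ψ A

/-- The open judgment `Γ ≫ M ≐ M′ ∈ B [Ψ]`, defined by functionality.  The
context is a list of pretypes, the head corresponding to the innermost
(de Bruijn index `0`) term variable. -/
def eqOpen (t : TypeSys) : Finset ℕ → List Tm → Tm → Tm → Tm → Prop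
  | Ψ, [], B, M, M' => t.ceqTm Ψ B M M'
  | Ψ, A :: Γ, B, M, M' =>
      ∀ (Ψ' : Finset ℕ) (ψ : ℕ → Dim), DSubst ψ Ψ' Ψ →
      ∀ N N' : Tm,
        eqOpen t Ψ' (Γ.map (Tm.dsubst ψ)) (A.dsubst ψ) N N' →
        eqOpen t Ψ' (Γ.map (Tm.dsubst ψ)) (B.dsubst ψ)
          ((M.dsubst ψ).tsubst 0 N) ((M'.dsubst ψ).tsubst 0 N')
  termination_by _ Γ _ _ _ => Γ.length
  decreasing_by all_goals (simp [List.length_map]; try omega)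

/-- Equal simultaneous closing term substitutions `γ ≐ γ′ ∈ Γ [Ψ]`
(componentwise equal elements of the pretypes of `Γ`). -/
def ceqSubst (t : TypeSys) (Ψ : Finset ℕ) : List Tm → List Tm → List Tm → Prop
  | [], [], [] => True
  | A :: Γ, N :: γ, N' :: γ' => t.ceqTm Ψ A N N' ∧ ceqSubst t Ψ Γ γ γ'
  | _, _, _ => False

end TypeSys

/-- The PER of the booleans, as a higher inductive type: the least relation
containing `true ≈ true`, `false ≈ false`, and relating formal `hcom` values
with equal caps and tubes (relative to the ambient type system `τ`). -/
inductive BoolPer (τ : TypeSys) : Finset ℕ → Tm → Tm → Prop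
  | tt (Ψ : Finset ℕ) : BoolPer τ Ψ Tm.tt Tm.tt
  | ff (Ψ : Finset ℕ) : BoolPer τ Ψ Tm.ff Tm.ff
  | hcom (Ψ : Finset ℕ) (x : ℕ) (r r' : Dim) (y : ℕ)
      (M O N0 N1 P0 P1 : Tm) :
      x ∉ Ψ → wfDim (insert x Ψ) r → wfDim (insert x Ψ) r' → r ≠ r' →
      y ∉ insert x Ψ →
      τ.ceqTm (insert x Ψ) Tm.bool M O →
      (∀ b : Bool,
        τ.ceqTm (insert y Ψ) Tm.bool
          (((pick b N0 N1).dopen (Dim.fvar y)).dsubstName x (dc b))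
          (((pick b P0 P1).dopen (Dim.fvar y)).dsubstName x (dc b))) →
      (∀ b : Bool,
        τ.ceqTm Ψ Tm.bool
          (((pick b N0 N1).dopen r).dsubstName x (dc b))
          (M.dsubstName x (dc b))) →
      BoolPer τ (insert x Ψ)
        (Tm.hcom (Dim.fvar x) Tm.bool r r' M N0 N1)
        (Tm.hcom (Dim.fvar x) Tm.bool r r' O P0 P1)

/-- The PER of the circle, as a higher inductive type. -/
inductive CirclePer (τ : TypeSys) : Finset ℕ → Tm → Tm → Prop
  | base (Ψ : Finset ℕ) : CirclePer τ Ψ Tm.base Tm.base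
  | loop (Ψ : Finset ℕ) (x : ℕ) :
      x ∈ Ψ → CirclePer τ Ψ (Tm.loop (Dim.fvar x)) (Tm.loop (Dim.fvar x))
  | hcom (Ψ : Finset ℕ) (x : ℕ) (r r' : Dim) (y : ℕ)
      (M O N0 N1 P0 P1 : Tm) :
      x ∉ Ψ → wfDim (insert x Ψ) r → wfDim (insert x Ψ) r' → r ≠ r' →
      y ∉ insert x Ψ →
      τ.ceqTm (insert x Ψ) Tm.circle M O →
      (∀ b : Bool,
        τ.ceqTm (insert y Ψ) Tm.circle
          (((pick b N0 N1).dopen (Dim.fvar y)).dsubstName x (dc b))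
          (((pick b P0 P1).dopen (Dim.fvar y)).dsubstName x (dc b))) →
      (∀ b : Bool,
        τ.ceqTm Ψ Tm.circle
          (((pick b N0 N1).dopen r).dsubstName x (dc b))
          (M.dsubstName x (dc b))) →
      CirclePer τ (insert x Ψ)
        (Tm.hcom (Dim.fvar x) Tm.circle r r' M N0 N1)
        (Tm.hcom (Dim.fvar x) Tm.circle r r' O P0 P1)

/-- The PER of a product type `A × B`. -/
def ProdPer (τ : TypeSys) (Ψ : Finset ℕ) (A B M N : Tm) : Prop :=
  ∃ M₁ M₂ N₁ N₂, M = Tm.pair M₁ N₁ ∧ N = Tm.pair M₂ N₂ ∧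
    τ.ceqTm Ψ A M₁ M₂ ∧ τ.ceqTm Ψ B N₁ N₂

/-- The PER of a function type `A → B`. -/
def ArrPer (τ : TypeSys) (Ψ : Finset ℕ) (A B M N : Tm) : Prop :=
  ∃ M₁ M₂, M = Tm.lam M₁ ∧ N = Tm.lam M₂ ∧ τ.eqOpen Ψ [A] B M₁ M₂

/-- The PER of the line `not(x)`. -/
def NotPer (τ : TypeSys) (Ψ : Finset ℕ) (x : ℕ) (M N : Tm) : Prop :=
  ∃ M' N', M = Tm.notel (Dim.fvar x) M' ∧ N = Tm.notel (Dim.fvar x) N' ∧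
    τ.ceqTm Ψ Tm.bool M' N'

/-- A cubical type system interpreting the type formers of the paper:
`bool` and `S¹` name their (least, higher inductive) PERs, products,
functions, and the line `not(x)` name the PERs described in the paper. -/
structure StdTypeSys extends TypeSys where
  bool_isPer : ∀ Ψ, isPer Ψ Tm.bool
  bool_vper : ∀ Ψ M N, vper Ψ Tm.bool M N ↔ BoolPer toTypeSys Ψ M N
  circle_isPer : ∀ Ψ, isPer Ψ Tm.circle
  circle_vper : ∀ Ψ M N, vper Ψ Tm.circle M N ↔ CirclePer toTypeSys Ψ M N
  prod_isPer : ∀ Ψ A B, toTypeSys.ctype Ψ A → toTypeSys.ctype Ψ B →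
    isPer Ψ (Tm.prod A B)
  prod_vper : ∀ Ψ A B M N, toTypeSys.ctype Ψ A → toTypeSys.ctype Ψ B →
    (vper Ψ (Tm.prod A B) M N ↔ ProdPer toTypeSys Ψ A B M N)
  arr_isPer : ∀ Ψ A B, toTypeSys.ctype Ψ A → toTypeSys.ctype Ψ B →
    isPer Ψ (Tm.arr A B)
  arr_vper : ∀ Ψ A B M N, toTypeSys.ctype Ψ A → toTypeSys.ctype Ψ B →
    (vper Ψ (Tm.arr A B) M N ↔ ArrPer toTypeSys Ψ A B M N)
  not_isPer : ∀ Ψ x, x ∈ Ψ → isPer Ψ (Tm.notb (Dim.fvar x))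
  not_vper : ∀ Ψ x, x ∈ Ψ → ∀ M N,
    (vper Ψ (Tm.notb (Dim.fvar x)) M N ↔ NotPer toTypeSys Ψ x M N)


/-!
The judgment `M ≐ N ∈ A [Ψ]` inspects `M` only through the values of its instances along `ψ₁` and
the composite of `ψ₁` and `ψ₂`, both total substitutions out of `Ψ`: the second evaluation of an
iterated instance starts from a value that the two terms already share. So `M` may replace any `M'`
whose instances have no further values. For membership this is done on both sides, which is
possible because the judgment is symmetric.
-/

theorem DSubst.comp {ψ₁ ψ₂ : ℕ → Dim} {Ψ Ψ₁ Ψ₂ : Finset ℕ}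
    (h₁ : DSubst ψ₁ Ψ₁ Ψ) (h₂ : DSubst ψ₂ Ψ₂ Ψ₁) : DSubst (dcomp ψ₁ ψ₂) Ψ₂ Ψ := by
  intro x hx
  rcases h₁ x hx with h | h | ⟨y, hy, h⟩
  · simp [dcomp, h, Dim.subst]
  · simp [dcomp, h, Dim.subst]
  · simpa [dcomp, h, Dim.subst] using h₂ y hy

theorem Steps.trans_eval {M M' V : Tm} (h : Steps M M') (hV : Eval M' V) : Eval M V :=
  ⟨h.trans hV.1, hV.2⟩

namespace TypeSys

variable {τ : TypeSys} {Ψ : Finset ℕ} {A M M' N : Tm}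

theorem ceqTm.symm (h : τ.ceqTm Ψ A M N) : τ.ceqTm Ψ A N M := by
  intro Ψ₁ Ψ₂ ψ₁ ψ₂ h₁ h₂
  obtain ⟨M₁, M₂, M₁₂, N₁, N₂, N₁₂, A₁₂, hM₁, hM₂, hM₁₂, hN₁, hN₂, hN₁₂, hA, hMM, hMN, hNN⟩ :=
    h Ψ₁ Ψ₂ ψ₁ ψ₂ h₁ h₂
  have hNM : τ.vper Ψ₂ A₁₂ N₁₂ M₂ := τ.vper_symm (τ.vper_trans hMM (τ.vper_trans hMN hNN))
  exact ⟨N₁, N₂, N₁₂, M₁, M₂, M₁₂, A₁₂, hN₁, hN₂, hN₁₂, hM₁, hM₂, hM₁₂, hA, hNN, hNM, hMM⟩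

theorem ceqTm.of_eval_left (h : τ.ceqTm Ψ A M' N)
    (hM : ∀ (Ψ' : Finset ℕ) (ψ : ℕ → Dim), DSubst ψ Ψ' Ψ →
      ∀ V, Eval (M'.dsubst ψ) V → Eval (M.dsubst ψ) V) :
    τ.ceqTm Ψ A M N := by
  intro Ψ₁ Ψ₂ ψ₁ ψ₂ h₁ h₂
  obtain ⟨M₁, M₂, M₁₂, N₁, N₂, N₁₂, A₁₂, hM₁, hM₂, hM₁₂, hrest⟩ := h Ψ₁ Ψ₂ ψ₁ ψ₂ h₁ h₂
  exact ⟨M₁, M₂, M₁₂, N₁, N₂, N₁₂, A₁₂,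
    hM Ψ₁ ψ₁ h₁ M₁ hM₁, hM₂, hM Ψ₂ (dcomp ψ₁ ψ₂) (h₁.comp h₂) M₁₂ hM₁₂, hrest⟩

theorem ceqTm.of_steps_left (h : τ.ceqTm Ψ A M' N)
    (hM : ∀ (Ψ' : Finset ℕ) (ψ : ℕ → Dim), DSubst ψ Ψ' Ψ →
      Steps (M.dsubst ψ) (M'.dsubst ψ)) :
    τ.ceqTm Ψ A M N :=
  h.of_eval_left fun Ψ' ψ hψ _ hV => (hM Ψ' ψ hψ).trans_eval hV

end TypeSys

/-- **Head expansion**: if `M′ ≐ N ∈ A [Ψ]` and every dimension-substitution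
instance of `M` head-reduces to the corresponding instance of `M′`, then
`M ≐ N ∈ A [Ψ]`.  In particular, if `M′ ∈ A [Ψ]` then `M ∈ A [Ψ]`. -/
theorem head_expansion (τ : TypeSys) (Ψ : Finset ℕ) (A : Tm) :
    (∀ M M' N : Tm, τ.ceqTm Ψ A M' N →
      (∀ (Ψ' : Finset ℕ) (ψ : ℕ → Dim), DSubst ψ Ψ' Ψ →
        Steps (M.dsubst ψ) (M'.dsubst ψ)) →
      τ.ceqTm Ψ A M N) ∧
    (∀ M M' : Tm, τ.cofTm Ψ A M' →
      (∀ (Ψ' : Finset ℕ) (ψ : ℕ → Dim), DSubst ψ Ψ' Ψ →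
        Steps (M.dsubst ψ) (M'.dsubst ψ)) →
      τ.cofTm Ψ A M) := by
  refine ⟨fun M M' N h hM => h.of_steps_left hM, fun M M' h hM => ?_⟩
  have hMM' : τ.ceqTm Ψ A M M' := TypeSys.ceqTm.of_steps_left h hM
  exact hMM'.symm.of_steps_left hM

end CHTT
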